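/- For every real α > −1 and every z ∈ ℂ∖[−1,1]: exp( ((z²−1)^{1/2}/(2π)) · ∫_{−1}^1 (α·log|x|)/(√(1−x²)·(z−x)) dx ) = exp( (α/2)·Log( z/(z+(z²−1)^{1/2}) ) ), where Log is the principal logarithm (the quantity z/(z+(z²−1)^{1/2}) avoids (−∞,0] for z ∈ ℂ∖[−1,1]). -/

import Mathlib

open MeasureTheory Real

/-- `(z²-1)^{1/2} = z √(1 - z⁻²)`, the branch analytic on `ℂ∖[-1,1]` which is positive
for real `z > 1`. -/
noncomputable def sqBranch (z : ℂ) : ℂ := z * (1 - z⁻¹ ^ 2) ^ ((1 : ℂ) / 2)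


/-- The (complexified) Poisson kernel. -/
noncomputable def pkern (w : ℂ) (θ : ℝ) : ℂ := (1 - w ^ 2) / (1 + w ^ 2 - 2 * w * Real.cos θ)

lemma pkern_factor (w : ℂ) (θ : ℝ) :
    Complex.exp (θ * Complex.I) * (1 + w ^ 2 - 2 * w * Real.cos θ) =
      (1 - w * Complex.exp (θ * Complex.I)) * (Complex.exp (θ * Complex.I) - w) := by
  have h2 : Complex.exp (θ * Complex.I) * Complex.exp (-(θ * Complex.I)) = 1 := by
    rw [← Complex.exp_add]; simp
  rw [Complex.ofReal_cos, Complex.cos, neg_mul]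
  linear_combination (-w) * h2

lemma one_sub_mul_ne (w u : ℂ) (hw : ‖w‖ < 1) (hu : ‖u‖ ≤ 1) : 1 - w * u ≠ 0 := by
  intro h
  have h1 : w * u = 1 := (sub_eq_zero.mp h).symm
  have h2 : ‖w‖ * ‖u‖ = 1 := by rw [← norm_mul, h1, norm_one]
  nlinarith [norm_nonneg w, norm_nonneg u]

lemma sub_ne_of_norm (w u : ℂ) (hw : ‖w‖ < 1) (hu : ‖u‖ = 1) : u - w ≠ 0 := by
  intro h
  rw [sub_eq_zero.mp h] at hu
  linarith

lemma pkern_den_ne (w : ℂ) (hw : ‖w‖ < 1) (θ : ℝ) : 1 + w ^ 2 - 2 * w * Real.cos θ ≠ 0 := by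
  intro h
  have h1 := pkern_factor w θ
  rw [h, mul_zero] at h1
  have hu : ‖Complex.exp (θ * Complex.I)‖ = 1 := Complex.norm_exp_ofReal_mul_I θ
  exact mul_ne_zero (one_sub_mul_ne w _ hw hu.le) (sub_ne_of_norm w _ hw hu) h1.symm

lemma pkern_continuous (w : ℂ) (hw : ‖w‖ < 1) : Continuous (pkern w) := by
  unfold pkern
  refine Continuous.div (by fun_prop) (by fun_prop) (pkern_den_ne w hw)

lemma cauchy_pkern (w : ℂ) (hw : ‖w‖ < 1) (g : ℂ → ℂ)
    (hg : DifferentiableOn ℂ g (Metric.closedBall 0 1)) :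
    ∫ θ in (0:ℝ)..2 * π, g (Complex.exp (θ * Complex.I)) * pkern w θ = 2 * π * g w := by
  have hd : DifferentiableOn ℂ (fun u => g u * ((1 - w ^ 2) / (1 - w * u)))
      (Metric.closedBall 0 1) := by
    refine hg.mul (DifferentiableOn.div (by fun_prop) (by fun_prop) ?_)
    intro u hu
    exact one_sub_mul_ne w u hw (by simpa using hu)
  have h := hd.circleIntegral_sub_inv_smul (w := w) (by simpa using hw)
  rw [circleIntegral] at h
  have h3 : (∫ θ in (0:ℝ)..2 * π, deriv (circleMap 0 1) θ • (fun u => (u - w)⁻¹ •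
      (fun u => g u * ((1 - w ^ 2) / (1 - w * u))) u) (circleMap 0 1 θ)) =
      ∫ θ in (0:ℝ)..2 * π, Complex.I * (g (Complex.exp (θ * Complex.I)) * pkern w θ) := by
    refine intervalIntegral.integral_congr fun θ _ => ?_
    have hu : ‖Complex.exp (θ * Complex.I)‖ = 1 := Complex.norm_exp_ofReal_mul_I θ
    have e1 := one_sub_mul_ne w _ hw hu.le
    have e2 := sub_ne_of_norm w _ hw hu
    have e3 := pkern_den_ne w hw θ
    have e4 := pkern_factor w θ
    simp only [deriv_circleMap, circleMap, smul_eq_mul, zero_add, Complex.ofReal_one, one_mul,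
      pkern]
    generalize Complex.exp (θ * Complex.I) = u at *
    generalize 1 + w ^ 2 - 2 * w * Real.cos θ = d at *
    have e6 : u * (u - w)⁻¹ * (1 - w * u)⁻¹ = d⁻¹ := by
      generalize 1 - w * u = a at *
      generalize u - w = b at *
      field_simp
      linear_combination e4
    rw [div_eq_mul_inv, div_eq_mul_inv, ← e6]
    ring
  rw [h3, intervalIntegral.integral_const_mul] at h
  have e5 := one_sub_mul_ne w w hw hw.le
  have : (1 - w ^ 2) / (1 - w * w) = 1 := by rw [← sq] at *; exact div_self e5
  simp only [this, mul_one, smul_eq_mul] at h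
  apply mul_left_cancel₀ Complex.I_ne_zero
  linear_combination h

lemma pkern_symm (w : ℂ) (θ : ℝ) : pkern w (2 * π - θ) = pkern w θ := by
  unfold pkern; rw [Real.cos_two_pi_sub]

/-- the regularised argument -/
noncomputable def rarg (r : ℝ) (u : ℂ) : ℂ := (1 + r * u ^ 2) / 2

lemma rarg_re_pos (r : ℝ) (h0 : 0 ≤ r) (h1 : r < 1) (u : ℂ) (hu : ‖u‖ ≤ 1) :
    0 < (rarg r u).re := by
  have h2 : ‖(r:ℂ) * u ^ 2‖ < 1 := by
    rw [norm_mul, norm_pow, Complex.norm_real, Real.norm_eq_abs, abs_of_nonneg h0]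
    have : ‖u‖ ^ 2 ≤ 1 := pow_le_one₀ (norm_nonneg _) hu
    nlinarith
  have h3 := (abs_lt.mp ((Complex.abs_re_le_norm _).trans_lt h2)).1
  have : (rarg r u).re = (1 + ((r:ℂ) * u ^ 2).re) / 2 := by
    unfold rarg
    rw [show (1 + (r:ℂ) * u ^ 2) / 2 = (1 + (r:ℂ) * u ^ 2) / ((2:ℝ):ℂ) by norm_num,
      Complex.div_ofReal_re, Complex.add_re, Complex.one_re]
  rw [this]; linarith

lemma integral_reg (w : ℂ) (hw : ‖w‖ < 1) (r : ℝ) (h0 : 0 ≤ r) (h1 : r < 1) :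
    ∫ θ in (0:ℝ)..2 * π, ((Real.log ‖rarg r (Complex.exp (θ * Complex.I))‖ : ℝ) : ℂ) * pkern w θ
      = 2 * π * Complex.log (rarg r w) := by
  have hu : ∀ θ : ℝ, ‖Complex.exp (θ * Complex.I)‖ = 1 := Complex.norm_exp_ofReal_mul_I
  have hpos : ∀ θ : ℝ, 0 < (rarg r (Complex.exp (θ * Complex.I))).re :=
    fun θ => rarg_re_pos r h0 h1 _ (hu θ).le
  have hd : DifferentiableOn ℂ (fun u => Complex.log (rarg r u)) (Metric.closedBall 0 1) := by
    intro u hu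
    have : DifferentiableAt ℂ (rarg r) u := by unfold rarg; fun_prop
    exact (this.clog (Or.inl (rarg_re_pos r h0 h1 u (by simpa using hu)))).differentiableWithinAt
  have hc := cauchy_pkern w hw _ hd
  have hcont : Continuous (fun θ : ℝ => Complex.log (rarg r (Complex.exp (θ * Complex.I)))) := by
    refine Continuous.clog (by unfold rarg; fun_prop) fun θ => Or.inl (hpos θ)
  have hk := pkern_continuous w hw
  set G : ℝ → ℂ := fun θ => Complex.log (rarg r (Complex.exp (θ * Complex.I))) with hG
  have hconj : ∀ θ : ℝ, G (2 * π - θ) = (starRingEnd ℂ) (G θ) := by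
    intro θ
    have e : Complex.exp (((2 * π - θ : ℝ) : ℂ) * Complex.I) =
        (starRingEnd ℂ) (Complex.exp (θ * Complex.I)) := by
      rw [← Complex.exp_conj]
      push_cast
      rw [sub_mul, Complex.exp_sub, Complex.exp_two_pi_mul_I, map_mul, Complex.conj_I,
        Complex.conj_ofReal, mul_neg, Complex.exp_neg, one_div]
    simp only [hG]
    rw [e, ← Complex.log_conj]
    · congr 1
      simp only [rarg, map_div₀, map_add, map_mul, map_pow, map_one, Complex.conj_ofReal,
        map_ofNat]
    · intro h
      have := (Complex.arg_eq_pi_iff.mp h).1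
      linarith [hpos θ]
  have hsw : ∫ θ in (0:ℝ)..2 * π, (starRingEnd ℂ) (G θ) * pkern w θ =
      ∫ θ in (0:ℝ)..2 * π, G θ * pkern w θ := by
    have := intervalIntegral.integral_comp_sub_left (a := 0) (b := 2 * π)
      (fun θ => G θ * pkern w θ) (2 * π)
    simp only [sub_self, sub_zero, pkern_symm, hconj] at this
    exact this
  have hlog : ∀ θ : ℝ, ((Real.log ‖rarg r (Complex.exp (θ * Complex.I))‖ : ℝ) : ℂ) * pkern w θ
      = (1/2 : ℂ) * (G θ * pkern w θ + (starRingEnd ℂ) (G θ) * pkern w θ) := by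
    intro θ
    rw [← Complex.log_re, ← add_mul, Complex.add_conj]
    simp only [hG]
    push_cast
    ring
  simp only [hlog]
  rw [intervalIntegral.integral_const_mul, intervalIntegral.integral_add, hsw, hc]
  · ring
  · exact (hcont.mul hk).intervalIntegrable _ _
  · exact ((Complex.continuous_conj.comp hcont).mul hk).intervalIntegrable _ _

lemma norm_rarg_one (θ : ℝ) : ‖rarg 1 (Complex.exp (θ * Complex.I))‖ = |Real.cos θ| := by
  have : rarg 1 (Complex.exp (θ * Complex.I)) =
      Complex.exp (θ * Complex.I) * ((Real.cos θ : ℝ) : ℂ) := by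
    have h2 : Complex.exp (θ * Complex.I) * Complex.exp (-(θ * Complex.I)) = 1 := by
      rw [← Complex.exp_add]; simp
    rw [rarg, Complex.ofReal_cos, Complex.cos, neg_mul, Complex.ofReal_one]
    linear_combination (-1/2) * h2
  rw [this, norm_mul, Complex.norm_exp_ofReal_mul_I, one_mul, Complex.norm_real, Real.norm_eq_abs]

lemma norm_rarg_le (r : ℝ) (h0 : 0 ≤ r) (h1 : r < 1) (u : ℂ) (hu : ‖u‖ = 1) :
    ‖rarg r u‖ ≤ 1 := by
  unfold rarg
  rw [norm_div]
  have h : ‖1 + (r:ℂ) * u ^ 2‖ ≤ 1 + r := by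
    refine (norm_add_le _ _).trans ?_
    simp [hu, abs_of_nonneg h0]
  simp only [Complex.norm_ofNat]
  linarith

lemma le_norm_rarg (r : ℝ) (h0 : 0 ≤ r) (h1 : r < 1) (u : ℂ) (hu : ‖u‖ = 1) :
    ‖rarg 1 u‖ / 2 ≤ ‖rarg r u‖ := by
  have h2 : ‖rarg 1 u‖ ≤ ‖rarg r u‖ + (1 - r) / 2 := by
    have : rarg 1 u = rarg r u + (((1 - r) / 2 : ℝ) : ℂ) * u ^ 2 := by
      unfold rarg; push_cast; ring
    rw [this]
    refine (norm_add_le _ _).trans ?_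
    rw [norm_mul, norm_pow, hu, Complex.norm_real, Real.norm_eq_abs,
      abs_of_nonneg (by linarith)]
    simp
  have h3 : (1 - r) / 2 ≤ ‖rarg r u‖ := by
    have : (1/2 : ℂ) = rarg r u - ((r / 2 : ℝ) : ℂ) * u ^ 2 := by
      unfold rarg; push_cast; ring
    have h4 : ‖(1/2 : ℂ)‖ ≤ ‖rarg r u‖ + r / 2 := by
      rw [this]
      refine (norm_sub_le _ _).trans ?_
      rw [norm_mul, norm_pow, hu, Complex.norm_real, Real.norm_eq_abs,
        abs_of_nonneg (by linarith)]
      simp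
    norm_num at h4
    linarith
  linarith

lemma ae_cos_ne : ∀ᵐ θ : ℝ, Real.cos θ ≠ 0 := by
  have : {θ : ℝ | Real.cos θ = 0}.Countable := by
    have : {θ : ℝ | Real.cos θ = 0} ⊆ Set.range (fun k : ℤ => (2 * (k:ℝ) + 1) * π / 2) := by
      intro θ hθ
      obtain ⟨k, hk⟩ := Real.cos_eq_zero_iff.mp hθ
      exact ⟨k, hk.symm⟩
    exact (Set.countable_range _).mono this
  exact this.ae_notMem _

lemma integral_full (w : ℂ) (hw : ‖w‖ < 1) :
    ∫ θ in (0:ℝ)..2 * π, ((Real.log (Real.cos θ) : ℝ) : ℂ) * pkern w θ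
      = 2 * π * Complex.log ((1 + w ^ 2) / 2) := by
  have hk := pkern_continuous w hw
  have hu : ∀ θ : ℝ, ‖Complex.exp (θ * Complex.I)‖ = 1 := Complex.norm_exp_ofReal_mul_I
  have hev : ∀ᶠ r : ℝ in nhdsWithin 1 (Set.Iio 1), 0 ≤ r ∧ r < 1 := by
    have : Set.Ioo (0:ℝ) 1 ∈ nhdsWithin (1:ℝ) (Set.Iio 1) := Ioo_mem_nhdsLT (by norm_num)
    filter_upwards [this] with r hr using ⟨hr.1.le, hr.2⟩
  have hT : Filter.Tendsto (fun r : ℝ => ∫ θ in (0:ℝ)..2 * π,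
      ((Real.log ‖rarg r (Complex.exp (θ * Complex.I))‖ : ℝ) : ℂ) * pkern w θ)
      (nhdsWithin 1 (Set.Iio 1))
      (nhds (∫ θ in (0:ℝ)..2 * π, ((Real.log (Real.cos θ) : ℝ) : ℂ) * pkern w θ)) := by
    refine intervalIntegral.tendsto_integral_filter_of_dominated_convergence
      (fun θ => (Real.log 2 + |Real.log (Real.cos θ)|) * ‖pkern w θ‖) ?_ ?_ ?_ ?_
    · filter_upwards with r
      have : Measurable fun θ : ℝ => ((Real.log ‖rarg r (Complex.exp (θ * Complex.I))‖ : ℝ) : ℂ) := by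
        unfold rarg; fun_prop
      exact (this.mul hk.measurable).aestronglyMeasurable
    · filter_upwards [hev] with r hr
      filter_upwards [ae_cos_ne] with θ hθ _
      rw [norm_mul, Complex.norm_real, Real.norm_eq_abs]
      gcongr
      have a1 := norm_rarg_le r hr.1 hr.2 _ (hu θ)
      have a2 := le_norm_rarg r hr.1 hr.2 _ (hu θ)
      rw [norm_rarg_one] at a2
      have hc : 0 < |Real.cos θ| := abs_pos.mpr hθ
      have a3 := Real.log_nonpos (norm_nonneg _) a1
      have a4 := Real.log_le_log (by positivity) a2
      rw [Real.log_div hc.ne' (by norm_num), Real.log_abs] at a4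
      rw [abs_of_nonpos a3]
      linarith [neg_abs_le (Real.log (Real.cos θ))]
    · refine IntervalIntegrable.mul_continuousOn ?_ hk.norm.continuousOn
      refine IntervalIntegrable.add (by simp) ?_
      exact intervalIntegrable_log_cos.abs
    · filter_upwards [ae_cos_ne] with θ hθ _
      have hc : 0 < |Real.cos θ| := abs_pos.mpr hθ
      rw [← Real.log_abs, ← norm_rarg_one] 
      refine Filter.Tendsto.mul_const _ ?_
      refine (Complex.continuous_ofReal.tendsto _).comp ?_
      refine Filter.Tendsto.log ?_ (by rw [norm_rarg_one]; exact hc.ne')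
      refine Filter.Tendsto.mono_left ?_ nhdsWithin_le_nhds
      have : Continuous fun r : ℝ => ‖rarg r (Complex.exp (θ * Complex.I))‖ := by
        unfold rarg; fun_prop
      exact this.tendsto 1
  have hT2 : Filter.Tendsto (fun r : ℝ => 2 * (π:ℂ) * Complex.log (rarg r w))
      (nhdsWithin 1 (Set.Iio 1)) (nhds (2 * π * Complex.log ((1 + w ^ 2) / 2))) := by
    refine Filter.Tendsto.mono_left ?_ nhdsWithin_le_nhds
    refine Filter.Tendsto.const_mul _ ?_
    have e : (1 + w ^ 2) / 2 = rarg 1 w := by simp [rarg]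
    rw [e]
    refine Filter.Tendsto.clog ?_ ?_
    · have : Continuous fun r : ℝ => rarg r w := by
        unfold rarg; fun_prop
      exact this.tendsto 1
    · left
      have h2 : ‖w ^ 2‖ < 1 := by
        rw [norm_pow]; exact pow_lt_one₀ (norm_nonneg _) hw (by norm_num)
      have h3 := (abs_lt.mp ((Complex.abs_re_le_norm _).trans_lt h2)).1
      rw [← e, show (1 + w ^ 2) / 2 = (1 + w ^ 2) / ((2:ℝ):ℂ) by norm_num,
        Complex.div_ofReal_re, Complex.add_re, Complex.one_re]
      linarith
  refine tendsto_nhds_unique hT (hT2.congr' ?_)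
  filter_upwards [hev] with r hr
  exact (integral_reg w hw r hr.1 hr.2).symm

lemma integral_half (w : ℂ) (hw : ‖w‖ < 1) :
    ∫ θ in (0:ℝ)..π, ((Real.log (Real.cos θ) : ℝ) : ℂ) * pkern w θ
      = π * Complex.log ((1 + w ^ 2) / 2) := by
  have hk := pkern_continuous w hw
  have hi : ∀ a b : ℝ, IntervalIntegrable
      (fun θ : ℝ => ((Real.log (Real.cos θ) : ℝ) : ℂ) * pkern w θ) volume a b := by
    intro a b
    refine IntervalIntegrable.mul_continuousOn ?_ hk.continuousOn
    have h : IntervalIntegrable (Real.log ∘ Real.cos) volume a b := intervalIntegrable_log_cos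
    exact ⟨h.1.ofReal, h.2.ofReal⟩
  have h := integral_full w hw
  rw [← intervalIntegral.integral_add_adjacent_intervals (hi 0 π) (hi π (2 * π))] at h
  have := intervalIntegral.integral_comp_sub_left (a := 0) (b := π)
      (fun θ : ℝ => ((Real.log (Real.cos θ) : ℝ) : ℂ) * pkern w θ) (2 * π)
  simp only [sub_zero, pkern_symm, Real.cos_two_pi_sub] at this
  rw [show 2 * π - π = π by ring] at this
  rw [← this] at h
  linear_combination h / 2

lemma subst_cos (α : ℝ) (z : ℂ) :
    (∫ x in (-1 : ℝ)..1,
          ((α * Real.log |x| : ℝ) : ℂ) / ((Real.sqrt (1 - x ^ 2) : ℂ) * (z - x))) =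
    ∫ θ in (0:ℝ)..π, ((α * Real.log (Real.cos θ) : ℝ) : ℂ) / (z - Real.cos θ) := by
  rw [intervalIntegral.integral_of_le (by norm_num), ← integral_Icc_eq_integral_Ioc,
    intervalIntegral.integral_of_le pi_pos.le, integral_Ioc_eq_integral_Ioo,
    ← Real.bijOn_cos.image_eq,
    integral_image_eq_integral_abs_deriv_smul measurableSet_Icc
      (fun x _ => (Real.hasDerivAt_cos x).hasDerivWithinAt) Real.bijOn_cos.injOn,
    integral_Icc_eq_integral_Ioo]
  refine setIntegral_congr_fun measurableSet_Ioo fun θ hθ => ?_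
  have hs : 0 < Real.sin θ := Real.sin_pos_of_pos_of_lt_pi hθ.1 hθ.2
  have hs' : (Real.sin θ : ℂ) ≠ 0 := by exact_mod_cast hs.ne'
  simp only [Real.log_abs, abs_neg, abs_of_pos hs]
  rw [← Real.sin_sq, Real.sqrt_sq hs.le, Complex.real_smul, ← mul_div_assoc,
    mul_div_mul_left _ _ hs']

lemma sqBranch_facts (z : ℂ) (hz : ¬(z.im = 0 ∧ |z.re| ≤ 1)) :
    sqBranch z ^ 2 = z ^ 2 - 1 ∧ ‖z - sqBranch z‖ < ‖z + sqBranch z‖ := by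
  have hz0 : z ≠ 0 := by
    rintro rfl; simp at hz
  set c : ℂ := (1 - z⁻¹ ^ 2) ^ ((1 : ℂ) / 2) with hc
  have hc2 : c ^ 2 = 1 - z⁻¹ ^ 2 := by
    rw [hc, one_div]; exact Complex.cpow_ofNat_inv_pow _ 2
  have hs : sqBranch z = z * c := rfl
  have hne : 1 - z⁻¹ ^ 2 ≠ 0 := by
    intro h
    have h1 : z ^ 2 = 1 := by field_simp at h; linear_combination h
    rcases sq_eq_sq_iff_eq_or_eq_neg.mp (h1.trans (one_pow 2).symm) with h | h <;> exact hz (by simp [h])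
  have hre : 0 < c.re := by
    have harg : (1 - z⁻¹ ^ 2).arg ≠ π := by
      intro h
      obtain ⟨ha, hb⟩ := Complex.arg_eq_pi_iff.mp h
      have hv : z ^ 2 * (1 - (1 - z⁻¹ ^ 2)) = 1 := by field_simp; ring
      generalize 1 - z⁻¹ ^ 2 = v at ha hb hv
      have hr := congrArg Complex.re hv
      have hi := congrArg Complex.im hv
      simp [pow_two, hb] at hr hi
      have ht : 0 < 1 - v.re := by linarith
      have hi' : z.re * z.im = 0 := by
        rcases hi with hi | hi
        · linarith
        · linarith
      rcases mul_eq_zero.mp hi' with h0 | h0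
      · rw [h0] at hr
        nlinarith [mul_nonneg (mul_self_nonneg z.im) ht.le]
      · refine hz ⟨h0, ?_⟩
        rw [h0] at hr
        rw [← sq_le_one_iff_abs_le_one]
        nlinarith [mul_self_nonneg z.re]
    rw [hc, Complex.cpow_def_of_ne_zero hne, Complex.exp_re]
    refine mul_pos (Real.exp_pos _) ?_
    have him : (Complex.log (1 - z⁻¹ ^ 2) * (1 / 2)).im = (1 - z⁻¹ ^ 2).arg / 2 := by
      rw [mul_one_div, show (2:ℂ) = ((2:ℝ):ℂ) by norm_num, Complex.div_ofReal_im, Complex.log_im]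
    rw [him]
    have h1 := Complex.neg_pi_lt_arg (1 - z⁻¹ ^ 2)
    have h2 := lt_of_le_of_ne (Complex.arg_le_pi (1 - z⁻¹ ^ 2)) harg
    exact Real.cos_pos_of_mem_Ioo ⟨by linarith, by linarith⟩
  refine ⟨?_, ?_⟩
  · rw [hs, mul_pow, hc2]; field_simp
  · have h1 : ‖1 - c‖ < ‖1 + c‖ := by
      rw [← sq_lt_sq₀ (norm_nonneg _) (norm_nonneg _), Complex.sq_norm, Complex.sq_norm,
        Complex.normSq_apply, Complex.normSq_apply]
      simp
      nlinarith
    rw [hs, show z - z * c = z * (1 - c) by ring, show z + z * c = z * (1 + c) by ring,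
      norm_mul, norm_mul]
    exact mul_lt_mul_of_pos_left h1 (norm_pos_iff.mpr hz0)

/-- **Lemma (the Szegő function of the weight `|x|^α`).**
For every real `α > -1` and every `z ∈ ℂ∖[-1,1]`:
`exp(((z²-1)^{1/2}/(2π)) ∫_{-1}^1 α log|x| / (√(1-x²)(z-x)) dx)
  = exp((α/2) Log(z/(z+(z²-1)^{1/2})))` with the principal logarithm. -/
theorem szego_abs_pow (α : ℝ) (hα : -1 < α) (z : ℂ) (hz : ¬(z.im = 0 ∧ |z.re| ≤ 1)) :
    Complex.exp (sqBranch z / (2 * π) *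
        ∫ x in (-1 : ℝ)..1,
          ((α * Real.log |x| : ℝ) : ℂ) / ((Real.sqrt (1 - x ^ 2) : ℂ) * (z - x))) =
      Complex.exp ((α / 2 : ℂ) * Complex.log (z / (z + sqBranch z))) := by
  obtain ⟨hs2, hlt⟩ := sqBranch_facts z hz
  set s := sqBranch z with hs
  have hprod : (z - s) * (z + s) = 1 := by linear_combination -hs2
  have hps : z + s ≠ 0 := right_ne_zero_of_mul_eq_one hprod
  have hw0 : z - s ≠ 0 := left_ne_zero_of_mul_eq_one hprod
  obtain ⟨w, hw⟩ : ∃ w, w = z - s := ⟨_, rfl⟩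
  have hw1 : ‖w‖ < 1 := by
    rw [hw]
    have h : ‖z - s‖ * ‖z + s‖ = 1 := by rw [← norm_mul, hprod, norm_one]
    by_contra! hcon
    nlinarith
  have hquot : z / (z + s) = (1 + w ^ 2) / 2 := by
    rw [div_eq_iff hps, hw]
    linear_combination (-(z - s) / 2) * hprod
  rw [subst_cos, hquot]
  have hint : (∫ θ in (0:ℝ)..π, ((α * Real.log (Real.cos θ) : ℝ) : ℂ) / (z - Real.cos θ)) * s =
      α * (π * Complex.log ((1 + w ^ 2) / 2)) := by
    rw [← integral_half w hw1, ← intervalIntegral.integral_mul_const,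
      ← intervalIntegral.integral_const_mul]
    refine intervalIntegral.integral_congr fun θ _ => ?_
    have hd := pkern_den_ne w hw1 θ
    have e : 1 + w ^ 2 - 2 * w * (Real.cos θ : ℂ) = 2 * w * (z - Real.cos θ) := by
      rw [hw]; linear_combination hs2
    have e' : 1 - w ^ 2 = 2 * w * s := by
      rw [hw]; linear_combination hs2
    rw [← hw] at hw0
    simp only [pkern]
    rw [e] at hd ⊢
    rw [e']
    have hd' := right_ne_zero_of_mul hd
    push_cast
    rw [mul_div_mul_left _ _ (mul_ne_zero two_ne_zero hw0)]
    ring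
  congr 1
  have hpi : (π : ℂ) ≠ 0 := by exact_mod_cast pi_ne_zero
  rw [div_mul_eq_mul_div, mul_comm s, hint]
  field_simp
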